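/- Let Γ^a_{bc} be a torsion-free affine connection on an open set U ⊆ ℝ² and let ω be a nowhere-vanishing C¹ 1-form on U. Then the symmetric tensor σ_{ab} = ω_a·ω_b satisfies the Killing-tensor equation ∇_{(a}σ_{bc)} = 0 on U if and only if ω satisfies the Killing equation ∇_{(a}ω_{b)} = 0 on U. (A connection admits a Killing 1-form ω if and only if σ_{ab} = ω_a ω_b is a degenerate solution of its metrisability equations.) -/

import Mathlib

/-- Partial derivative `∂_i f` on `ℝ²` (points as `Fin 2 → ℝ`). -/
noncomputable def pdv (i : Fin 2) (f : (Fin 2 → ℝ) → ℝ) (x : Fin 2 → ℝ) : ℝ :=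
  fderiv ℝ f x (Pi.single i 1)

/-- Covariant derivative `∇_a σ_{bc}` of a `(0,2)`-tensor. -/
noncomputable def covLow (Γ : Fin 2 → Fin 2 → Fin 2 → (Fin 2 → ℝ) → ℝ)
    (σ : Fin 2 → Fin 2 → (Fin 2 → ℝ) → ℝ)
    (a b c : Fin 2) (x : Fin 2 → ℝ) : ℝ :=
  pdv a (σ b c) x - ∑ d, Γ d a b x * σ d c x - ∑ d, Γ d a c x * σ b d x

/-- Covariant derivative `∇_a K_b` of a 1-form. -/
noncomputable def covForm (Γ : Fin 2 → Fin 2 → Fin 2 → (Fin 2 → ℝ) → ℝ)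
    (K : Fin 2 → (Fin 2 → ℝ) → ℝ) (a b : Fin 2) (x : Fin 2 → ℝ) : ℝ :=
  pdv a (K b) x - ∑ c, Γ c a b x * K c x

/-!
The Leibniz rule turns `6 ∇_{(a}(ω_b ω_{c)})` into twice the cyclic sum of `ω_a S_{bc}`, where
`S_{ab} = 2 ∇_{(a}ω_{b)}`, and multiplication of symmetric tensors by a nonzero covector is
injective; so the two equations agree at every point where `ω ≠ 0`. A zero of `ω` is either a limit
of such points, where `S` vanishes by continuity, or has a neighbourhood on which `ω`, and hence
`S`, is identically zero.
-/

open Filter Topology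

theorem cyclic_sum_mul_eq_zero_iff {ι R : Type*} [CommSemiring R] [NoZeroDivisors R]
    (h2 : (2 : R) ≠ 0) (h3 : (3 : R) ≠ 0) {v : ι → R} (hv : v ≠ 0) {S : ι → ι → R}
    (hS : ∀ b c, S b c = S c b) :
    (∀ a b c, v a * S b c + v b * S c a + v c * S a b = 0) ↔ ∀ b c, S b c = 0 := by
  refine ⟨fun h ↦ ?_, fun h a b c ↦ by simp [h]⟩
  obtain ⟨a, ha⟩ : ∃ a, v a ≠ 0 := Function.ne_iff.mp hv
  have diagonal : S a a = 0 := by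
    have : 3 * (v a * S a a) = 0 := by rw [← h a a a]; ring
    simpa [h3, ha] using this
  have row (d : ι) : S a d = 0 := by
    have : 2 * (v a * S a d) = 0 := by rw [← h a a d, hS d a, diagonal]; ring
    simpa [h2, ha] using this
  intro b c
  simpa [hS c a, row, ha] using h a b c

theorem pdv_mul (i : Fin 2) {f g : (Fin 2 → ℝ) → ℝ} {x : Fin 2 → ℝ}
    (hf : DifferentiableAt ℝ f x) (hg : DifferentiableAt ℝ g x) :
    pdv i (fun y ↦ f y * g y) x = pdv i f x * g x + f x * pdv i g x := by
  simp only [pdv, fderiv_fun_mul hf hg, add_apply, smul_apply, smul_eq_mul]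
  ring

theorem continuousOn_pdv (i : Fin 2) {f : (Fin 2 → ℝ) → ℝ} {U : Set (Fin 2 → ℝ)} (hU : IsOpen U)
    (hf : ContDiffOn ℝ 1 f U) : ContinuousOn (pdv i f) U :=
  (hf.continuousOn_fderiv_of_isOpen hU le_rfl).clm_apply continuousOn_const

theorem pdv_eq_zero_of_eventuallyEq_zero (i : Fin 2) {f : (Fin 2 → ℝ) → ℝ} {x : Fin 2 → ℝ}
    (hf : f =ᶠ[𝓝 x] 0) : pdv i f x = 0 := by
  simp [pdv, hf.fderiv_eq]

section Connection

variable (Γ : Fin 2 → Fin 2 → Fin 2 → (Fin 2 → ℝ) → ℝ)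

/-- The left-hand side `∇_a K_b + ∇_b K_a = 2 ∇_{(a}K_{b)}` of the Killing equation for a 1-form,
without the normalising factor `1/2`. -/
noncomputable def symCovForm (K : Fin 2 → (Fin 2 → ℝ) → ℝ) (a b : Fin 2) (x : Fin 2 → ℝ) : ℝ :=
  covForm Γ K a b x + covForm Γ K b a x

/-- The left-hand side `6 ∇_{(a}σ_{bc)}` of the Killing-tensor equation, as the sum over all
permutations of the indices. The tensor `σ` is not required to be symmetric. -/
noncomputable def symCovLow (σ : Fin 2 → Fin 2 → (Fin 2 → ℝ) → ℝ) (a b c : Fin 2)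
    (x : Fin 2 → ℝ) : ℝ :=
  covLow Γ σ a b c x + covLow Γ σ b c a x + covLow Γ σ c a b x
    + covLow Γ σ a c b x + covLow Γ σ b a c x + covLow Γ σ c b a x

theorem covLow_mul {K L : Fin 2 → (Fin 2 → ℝ) → ℝ} (a : Fin 2) {b c : Fin 2} {x : Fin 2 → ℝ}
    (hK : DifferentiableAt ℝ (K b) x) (hL : DifferentiableAt ℝ (L c) x) :
    covLow Γ (fun a b y ↦ K a y * L b y) a b c x
      = covForm Γ K a b x * L c x + K b x * covForm Γ L a c x := by
  simp only [covLow, covForm, pdv_mul a hK hL, Fin.sum_univ_two]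
  ring

theorem symCovForm_comm (K : Fin 2 → (Fin 2 → ℝ) → ℝ) (a b : Fin 2) (x : Fin 2 → ℝ) :
    symCovForm Γ K a b x = symCovForm Γ K b a x :=
  add_comm _ _

theorem symCovLow_mul_self {ω : Fin 2 → (Fin 2 → ℝ) → ℝ} {x : Fin 2 → ℝ}
    (hω : ∀ a, DifferentiableAt ℝ (ω a) x) (a b c : Fin 2) :
    symCovLow Γ (fun a b y ↦ ω a y * ω b y) a b c x
      = 2 * (ω a x * symCovForm Γ ω b c x + ω b x * symCovForm Γ ω c a x
        + ω c x * symCovForm Γ ω a b x) := by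
  simp only [symCovLow, symCovForm, covLow_mul Γ _ (hω _) (hω _)]
  ring

theorem forall_symCovLow_mul_self_eq_zero_iff_of_ne_zero {ω : Fin 2 → (Fin 2 → ℝ) → ℝ}
    {x : Fin 2 → ℝ} (hω : ∀ a, DifferentiableAt ℝ (ω a) x) (hx : ∃ a, ω a x ≠ 0) :
    (∀ a b c, symCovLow Γ (fun a b y ↦ ω a y * ω b y) a b c x = 0)
      ↔ ∀ a b, symCovForm Γ ω a b x = 0 := by
  simp only [symCovLow_mul_self Γ hω, mul_eq_zero, two_ne_zero, false_or]
  exact cyclic_sum_mul_eq_zero_iff two_ne_zero three_ne_zero (Function.ne_iff.mpr hx)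
    (symCovForm_comm Γ ω · · x)

theorem symCovForm_eq_zero_of_eventually_eq_zero {K : Fin 2 → (Fin 2 → ℝ) → ℝ} {x : Fin 2 → ℝ}
    (hK : ∀ᶠ y in 𝓝 x, ∀ a, K a y = 0) (a b : Fin 2) : symCovForm Γ K a b x = 0 := by
  have pdv_zero (i j : Fin 2) : pdv i (K j) x = 0 :=
    pdv_eq_zero_of_eventuallyEq_zero i (hK.mono fun _ hy ↦ hy j)
  simp [symCovForm, covForm, pdv_zero, hK.self_of_nhds]

variable {Γ} {U : Set (Fin 2 → ℝ)} {ω : Fin 2 → (Fin 2 → ℝ) → ℝ}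

theorem continuousOn_covForm (hU : IsOpen U) (hΓ : ∀ a b c, ContinuousOn (Γ a b c) U)
    (hω : ∀ a, ContDiffOn ℝ 1 (ω a) U) (a b : Fin 2) : ContinuousOn (covForm Γ ω a b) U :=
  (continuousOn_pdv a hU (hω b)).sub <|
    continuousOn_finsetSum _ fun c _ ↦ (hΓ c a b).mul (hω c).continuousOn

theorem continuousOn_symCovForm (hU : IsOpen U) (hΓ : ∀ a b c, ContinuousOn (Γ a b c) U)
    (hω : ∀ a, ContDiffOn ℝ 1 (ω a) U) (a b : Fin 2) : ContinuousOn (symCovForm Γ ω a b) U :=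
  (continuousOn_covForm hU hΓ hω a b).add (continuousOn_covForm hU hΓ hω b a)

theorem symCovForm_eq_zero_of_forall_ne_zero (hU : IsOpen U)
    (hΓ : ∀ a b c, ContinuousOn (Γ a b c) U) (hω : ∀ a, ContDiffOn ℝ 1 (ω a) U) {a b : Fin 2}
    (h : ∀ x ∈ U, (∃ d, ω d x ≠ 0) → symCovForm Γ ω a b x = 0) {x : Fin 2 → ℝ} (hx : x ∈ U) :
    symCovForm Γ ω a b x = 0 := by
  have hUx : U ∈ 𝓝 x := hU.mem_nhds hx
  by_cases locally_zero : ∀ᶠ y in 𝓝 x, ∀ d, ω d y = 0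
  · exact symCovForm_eq_zero_of_eventually_eq_zero Γ locally_zero a b
  · have nonzero_nearby : ∃ᶠ y in 𝓝 x, ∃ d, ω d y ≠ 0 := by
      simpa only [not_eventually, not_forall] using locally_zero
    have killing_nearby : ∃ᶠ y in 𝓝 x, symCovForm Γ ω a b y ∈ ({0} : Set ℝ) :=
      (nonzero_nearby.and_eventually hUx).mono fun y hy ↦ h y hy.2 hy.1
    exact isClosed_singleton.mem_of_frequently_of_tendsto killing_nearby
      ((continuousOn_symCovForm hU hΓ hω a b).continuousAt hUx)

theorem killing_form_iff_degenerate_killing_tensor_general (hU : IsOpen U)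
    (hΓ : ∀ a b c, ContinuousOn (Γ a b c) U) (hω : ∀ a, ContDiffOn ℝ 1 (ω a) U) :
    (∀ a b c, ∀ x ∈ U, symCovLow Γ (fun a b y ↦ ω a y * ω b y) a b c x = 0)
      ↔ ∀ a b, ∀ x ∈ U, symCovForm Γ ω a b x = 0 := by
  have differentiable (x) (hx : x ∈ U) (a : Fin 2) : DifferentiableAt ℝ (ω a) x :=
    ((hω a).differentiableOn one_ne_zero).differentiableAt (hU.mem_nhds hx)
  constructor
  · intro tensor a b x hx
    refine symCovForm_eq_zero_of_forall_ne_zero hU hΓ hω (fun y hy hy0 ↦ ?_) hx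
    exact (forall_symCovLow_mul_self_eq_zero_iff_of_ne_zero Γ (differentiable y hy) hy0).mp
      (tensor · · · y hy) a b
  · intro form a b c x hx
    simp [symCovLow_mul_self Γ (differentiable x hx), form _ _ x hx]

end Connection

/-- For a nowhere-vanishing 1-form `ω`, the tensor `σ_{ab} = ω_a ω_b` satisfies the
Killing-tensor equation `∇_{(a}σ_{bc)} = 0` iff `ω` satisfies the Killing equation
`∇_{(a}ω_{b)} = 0`. -/
theorem killing_form_iff_degenerate_killing_tensor
    (U : Set (Fin 2 → ℝ)) (hU : IsOpen U)
    (Γ : Fin 2 → Fin 2 → Fin 2 → (Fin 2 → ℝ) → ℝ)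
    (hΓsym : ∀ a b c x, Γ a b c x = Γ a c b x)
    (hΓC1 : ∀ a b c, ContDiffOn ℝ 1 (Γ a b c) U)
    (ω : Fin 2 → (Fin 2 → ℝ) → ℝ)
    (hωC1 : ∀ a, ContDiffOn ℝ 1 (ω a) U)
    (hω0 : ∀ x ∈ U, ∃ a, ω a x ≠ 0) :
    (∀ a b c : Fin 2, ∀ x ∈ U,
        covLow Γ (fun a b x => ω a x * ω b x) a b c x
          + covLow Γ (fun a b x => ω a x * ω b x) b c a x
          + covLow Γ (fun a b x => ω a x * ω b x) c a b x
          + covLow Γ (fun a b x => ω a x * ω b x) a c b x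
          + covLow Γ (fun a b x => ω a x * ω b x) b a c x
          + covLow Γ (fun a b x => ω a x * ω b x) c b a x = 0)
      ↔ (∀ a b : Fin 2, ∀ x ∈ U, covForm Γ ω a b x + covForm Γ ω b a x = 0) :=
  killing_form_iff_degenerate_killing_tensor_general hU
    (fun a b c ↦ (hΓC1 a b c).continuousOn) hωC1
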